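/- Let χ be a measurable space, D a probability distribution over samples from χ, and let ε ≥ 0, γ ≥ 0, α ≥ 0, b > 0, and an integer k ≥ 1. For each i ∈ {1,…,k}, let A_i be a measurable map assigning to each vector of past answers (a_1,…,a_{i−1}) ∈ ℝ^{i−1} a query A_i(a_1,…,a_{i−1}) : χ → [0,1], such that every query in the image of A_i is (ε,γ)-concentrated with respect to D. Draw S ∼ D and η_1,…,η_k i.i.d. from Lap(0,b), independent of S, and define recursively q_i = A_i(a_1,…,a_{i−1}) and a_i = q_i(D) + η_i. Then with probability at least 1 − k·γ − (1 − (1 − e^{−α/b})^k), simultaneously for every i ∈ {1,…,k}: |q_i(S) − q_i(D)| ≤ ε and |η_i| ≤ α. -/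

import Mathlib

/-!
The noise vector `η` determines the whole transcript of the interaction with the oracle mechanism,
so the queries are independent of the sample `S`: for each fixed `η`, the `i`-th query is a fixed
element of the image of `A i`, and its failure event has `D`-measure at most `γ`.  By Tonelli's
theorem the failure event of the `i`-th query has measure at most `γ` under the product measure
(`prod_bad_le`).  The noise event is a box, of measure `(1 - e^{-α/b})^k` (`lap_abs_le`).  Removing
the `k` failure events from the noise event leaves at least `(1 - e^{-α/b})^k - kγ`.

Tonelli's theorem needs the failure events to be jointly measurable in `(S, η)`, which follows from
the measurability of the answers as functions of `η`, proved by strong induction on the round.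
-/

open MeasureTheory

/-- The Laplace probability measure on `ℝ` with location `μ` and scale `b`, i.e. the measure
with density `x ↦ (1/(2b))·exp(−|x−μ|/b)` with respect to Lebesgue measure. -/
noncomputable def lap (μ b : ℝ) : Measure ℝ :=
  volume.withDensity fun x => ENNReal.ofReal ((1 / (2 * b)) * Real.exp (-|x - μ| / b))

/-- The empirical mean `q(S) = (1/n)·Σ_ℓ q(S ℓ)` of a query on a sample `S ∈ χ^n`. -/
noncomputable def empMean {χ : Type*} {n : ℕ} (q : χ → ℝ) (S : Fin n → χ) : ℝ :=
  (1 / (n : ℝ)) * ∑ ℓ : Fin n, q (S ℓ)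

/-- The true mean `q(D) = E_{T∼D}[q(T)]` of a query under the sample distribution `D`. -/
noncomputable def trueMean {χ : Type*} [MeasurableSpace χ] {n : ℕ}
    (D : Measure (Fin n → χ)) (q : χ → ℝ) : ℝ :=
  ∫ T, empMean q T ∂D

/-- The oracle mechanism's answers, defined recursively: the `i`-th answer is
`a_i = q_i(D) + η_i`, where `q_i = A_i(a_0, …, a_{i−1})` is the query chosen by the analyst
`A` from the previous answers and `η_i` is the `i`-th noise. -/
noncomputable def oracleAns {χ : Type*} [MeasurableSpace χ] {n k : ℕ}
    (D : Measure (Fin n → χ)) (A : (i : Fin k) → (Fin i → ℝ) → χ → ℝ)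
    (η : Fin k → ℝ) : (i : ℕ) → i < k → ℝ
  | i, hi =>
    trueMean D (A ⟨i, hi⟩ fun j => oracleAns D A η j (lt_trans j.2 hi)) + η ⟨i, hi⟩
  termination_by i _ => i

/-- The `i`-th query in the interaction of the analyst `A` with the oracle mechanism, given
the realized noise vector `η`. -/
noncomputable def oracleQuery {χ : Type*} [MeasurableSpace χ] {n k : ℕ}
    (D : Measure (Fin n → χ)) (A : (i : Fin k) → (Fin i → ℝ) → χ → ℝ)
    (η : Fin k → ℝ) (i : Fin k) : χ → ℝ :=
  A i fun j => oracleAns D A η j (lt_trans j.2 i.2)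

open scoped Topology ENNReal

lemma lap_integral_Icc {b α : ℝ} (hb : 0 < b) (hα : 0 ≤ α) :
    ∫ x in Set.Icc (-α) α, (1 / (2 * b)) * Real.exp (-|x - 0| / b) = 1 - Real.exp (-α / b) := by
  have hc : Continuous fun x : ℝ => (1 / (2 * b)) * Real.exp (-|x - 0| / b) := by fun_prop
  rw [MeasureTheory.integral_Icc_eq_integral_Ioc, ← intervalIntegral.integral_of_le (by linarith),
    ← intervalIntegral.integral_add_adjacent_intervals (b := 0)
      (hc.intervalIntegrable _ _) (hc.intervalIntegrable _ _)]
  have h1 : ∫ x in (-α)..0, (1 / (2 * b)) * Real.exp (-|x - 0| / b)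
      = (1 / 2) * Real.exp (0 / b) - (1 / 2) * Real.exp (-α / b) := by
    refine intervalIntegral.integral_eq_sub_of_hasDerivAt (f := fun x => (1 / 2) * Real.exp (x / b))
      (fun x hx => ?_) (hc.intervalIntegrable _ _)
    rw [Set.uIcc_of_le (by linarith)] at hx
    have h := (((hasDerivAt_id x).div_const b).exp).const_mul (1 / 2 : ℝ)
    refine HasDerivAt.congr_deriv h ?_
    rw [sub_zero, abs_of_nonpos hx.2, neg_neg]
    simp only [id]
    field_simp
  have h2 : ∫ x in (0)..α, (1 / (2 * b)) * Real.exp (-|x - 0| / b)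
      = -(1 / 2) * Real.exp (-α / b) - -(1 / 2) * Real.exp (-0 / b) := by
    refine intervalIntegral.integral_eq_sub_of_hasDerivAt
      (f := fun x => -(1 / 2) * Real.exp (-x / b))
      (fun x hx => ?_) (hc.intervalIntegrable _ _)
    rw [Set.uIcc_of_le hα] at hx
    have h := (((hasDerivAt_id x).neg.div_const b).exp).const_mul (-(1 / 2) : ℝ)
    refine HasDerivAt.congr_deriv h ?_
    rw [sub_zero, abs_of_nonneg hx.1]
    simp only [Pi.neg_apply, id]
    field_simp
  rw [h1, h2]
  simp
  ring

lemma lap_Icc {b α : ℝ} (hb : 0 < b) (hα : 0 ≤ α) :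
    lap 0 b (Set.Icc (-α) α) = ENNReal.ofReal (1 - Real.exp (-α / b)) := by
  have hc : Continuous fun x : ℝ => (1 / (2 * b)) * Real.exp (-|x - 0| / b) := by fun_prop
  rw [lap, withDensity_apply _ measurableSet_Icc, ← lap_integral_Icc hb hα,
    ofReal_integral_eq_lintegral_ofReal hc.integrableOn_Icc
      (Filter.Eventually.of_forall fun x => by positivity)]

lemma lap_abs_le {b α : ℝ} (hb : 0 < b) (hα : 0 ≤ α) :
    lap 0 b {x | |x| ≤ α} = ENNReal.ofReal (1 - Real.exp (-α / b)) := by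
  rw [← lap_Icc hb hα]
  congr 1
  ext x
  simp [abs_le]

/-- Continuity from below along the intervals `[-m, m]`, whose masses tend to `1`. -/
lemma isProbabilityMeasure_lap {b : ℝ} (hb : 0 < b) : IsProbabilityMeasure (lap 0 b) := by
  constructor
  have hmono : Monotone fun m : ℕ => Set.Icc (-(m : ℝ)) m := by
    intro i j hij
    have : (i : ℝ) ≤ j := by exact_mod_cast hij
    exact Set.Icc_subset_Icc (by linarith) this
  have hU : ⋃ m : ℕ, Set.Icc (-(m : ℝ)) m = Set.univ := by
    refine Set.eq_univ_of_forall fun x => Set.mem_iUnion.2 ?_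
    obtain ⟨m, hm⟩ := exists_nat_ge |x|
    exact ⟨m, abs_le.1 hm⟩
  have h1 := tendsto_measure_iUnion_atTop (μ := lap 0 b) hmono
  rw [hU] at h1
  refine tendsto_nhds_unique h1 ?_
  have h2 : Filter.Tendsto (fun m : ℕ => Real.exp (-(m : ℝ) / b)) Filter.atTop (𝓝 0) := by
    refine Real.tendsto_exp_atBot.comp ?_
    exact (Filter.tendsto_neg_atTop_atBot.comp tendsto_natCast_atTop_atTop).atBot_div_const hb
  have h3 := ENNReal.tendsto_ofReal (h2.const_sub 1)
  rw [sub_zero, ENNReal.ofReal_one] at h3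
  exact h3.congr fun m => (lap_Icc hb (Nat.cast_nonneg m)).symm

section Measurability

variable {χ : Type*} [MeasurableSpace χ] {n k : ℕ}

lemma measurable_empMean {β : Type*} [MeasurableSpace β] {q : β → χ → ℝ}
    (hq : Measurable fun p : β × χ => q p.1 p.2) :
    Measurable fun p : β × (Fin n → χ) => empMean (q p.1) p.2 := by
  unfold empMean
  refine (Finset.measurable_sum _ fun l _ => ?_).const_mul _
  exact hq.comp (measurable_fst.prodMk ((measurable_pi_apply l).comp measurable_snd))

lemma measurable_trueMean (D : Measure (Fin n → χ)) [IsProbabilityMeasure D]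
    {β : Type*} [MeasurableSpace β] {q : β → χ → ℝ}
    (hq : Measurable fun p : β × χ => q p.1 p.2) :
    Measurable fun y : β => trueMean D (q y) := by
  unfold trueMean
  exact ((measurable_empMean (n := n) hq).stronglyMeasurable.integral_prod_right (ν := D)).measurable

lemma measurable_oracleAns (D : Measure (Fin n → χ)) [IsProbabilityMeasure D]
    (A : (i : Fin k) → (Fin i → ℝ) → χ → ℝ)
    (hmeas : ∀ i : Fin k, Measurable fun p : (Fin i → ℝ) × χ => A i p.1 p.2)
    (i : ℕ) (hi : i < k) : Measurable fun η : Fin k → ℝ => oracleAns D A η i hi := by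
  induction i using Nat.strong_induction_on with
  | _ i ih =>
    have h : (fun η : Fin k → ℝ => oracleAns D A η i hi) = fun η =>
        trueMean D (A ⟨i, hi⟩ fun j => oracleAns D A η j (lt_trans j.2 hi)) + η ⟨i, hi⟩ := by
      funext η
      rw [oracleAns]
    rw [h]
    refine Measurable.add ?_ (measurable_pi_apply _)
    exact (measurable_trueMean D (hmeas ⟨i, hi⟩)).comp
      (measurable_pi_lambda _ fun j => ih j j.2 (lt_trans j.2 hi))

/-- Tonelli: once the noise is fixed, the `i`-th query is a fixed element of the image of `A i`, so
its failure probability over `S` is at most `c`. -/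
lemma prod_bad_le (D : Measure (Fin n → χ)) [IsProbabilityMeasure D]
    (ν : Measure (Fin k → ℝ)) [IsProbabilityMeasure ν]
    (A : (i : Fin k) → (Fin i → ℝ) → χ → ℝ)
    (hmeas : ∀ i : Fin k, Measurable fun p : (Fin i → ℝ) × χ => A i p.1 p.2)
    {ε : ℝ} {c : ℝ≥0∞} (i : Fin k)
    (hconc : ∀ as : Fin i → ℝ,
      D {S | ε ≤ |empMean (A i as) S - trueMean D (A i as)|} ≤ c) :
    (D.prod ν) {ω | ε ≤ |empMean (oracleQuery D A ω.2 i) ω.1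
        - trueMean D (oracleQuery D A ω.2 i)|} ≤ c := by
  have hans : Measurable fun η : Fin k → ℝ =>
      fun j : Fin i => oracleAns D A η j (lt_trans j.2 i.2) :=
    measurable_pi_lambda _ fun j => measurable_oracleAns D A hmeas j _
  have hm : MeasurableSet {ω : (Fin n → χ) × (Fin k → ℝ) |
      ε ≤ |empMean (oracleQuery D A ω.2 i) ω.1 - trueMean D (oracleQuery D A ω.2 i)|} := by
    have he : Measurable fun ω : (Fin n → χ) × (Fin k → ℝ) =>
        empMean (oracleQuery D A ω.2 i) ω.1 :=
      (measurable_empMean (n := n) (hmeas i)).comp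
        ((hans.comp measurable_snd).prodMk measurable_fst)
    have ht : Measurable fun ω : (Fin n → χ) × (Fin k → ℝ) =>
        trueMean D (oracleQuery D A ω.2 i) :=
      (measurable_trueMean D (hmeas i)).comp (hans.comp measurable_snd)
    have hd := (he.sub ht).norm
    simp only [Real.norm_eq_abs] at hd
    exact measurableSet_le measurable_const hd
  rw [Measure.prod_apply_symm hm]
  calc _ ≤ ∫⁻ _, c ∂ν := lintegral_mono fun η =>
        hconc fun j => oracleAns D A η j (lt_trans j.2 i.2)
    _ = c := by simp

end Measurability

/-- Lemma 4.9: let `D` be a distribution over samples from `χ` and let an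
adaptive analyst be given by measurable maps `A_i` from past answer vectors to queries with
values in `[0,1]`, every query in whose image is `(ε,γ)`-concentrated w.r.t. `D`.  Draw
`S ∼ D` and i.i.d. noises `η_1, …, η_k ∼ Lap(0,b)` independent of `S`, and let the oracle
mechanism answer `a_i = q_i(D) + η_i`.  Then with probability at least
`1 − k·γ − (1 − (1 − e^{−α/b})^k)`, simultaneously for every `i`:
`|q_i(S) − q_i(D)| ≤ ε` and `|η_i| ≤ α`. -/
theorem stmt_10 {χ : Type*} [MeasurableSpace χ] (n : ℕ) (hn : 1 ≤ n)
    (D : Measure (Fin n → χ)) [IsProbabilityMeasure D]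
    (ε γ α b : ℝ) (hε : 0 ≤ ε) (hγ : 0 ≤ γ) (hα : 0 ≤ α) (hb : 0 < b)
    (k : ℕ) (hk : 1 ≤ k)
    (A : (i : Fin k) → (Fin i → ℝ) → χ → ℝ)
    (hmeas : ∀ i : Fin k, Measurable fun p : (Fin i → ℝ) × χ => A i p.1 p.2)
    (hrange : ∀ (i : Fin k) (as : Fin i → ℝ) (x : χ), A i as x ∈ Set.Icc (0 : ℝ) 1)
    (hconc : ∀ (i : Fin k) (as : Fin i → ℝ),
      D {S | ε ≤ |empMean (A i as) S - trueMean D (A i as)|} ≤ ENNReal.ofReal γ) :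
    ENNReal.ofReal (1 - k * γ - (1 - (1 - Real.exp (-α / b)) ^ k)) ≤
      (D.prod (Measure.pi fun _ : Fin k => lap 0 b))
        {ω | ∀ i : Fin k,
          |empMean (oracleQuery D A ω.2 i) ω.1 - trueMean D (oracleQuery D A ω.2 i)| ≤ ε
          ∧ |ω.2 i| ≤ α} := by
  have := isProbabilityMeasure_lap hb
  set ν := Measure.pi fun _ : Fin k => lap 0 b with hν
  set bad : Fin k → Set ((Fin n → χ) × (Fin k → ℝ)) := fun i => {ω |
    ε ≤ |empMean (oracleQuery D A ω.2 i) ω.1 - trueMean D (oracleQuery D A ω.2 i)|} with hbad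
  set ok : Set ((Fin n → χ) × (Fin k → ℝ)) :=
    Set.univ ×ˢ Set.univ.pi fun _ : Fin k => {x : ℝ | |x| ≤ α} with hok
  have hp : 0 ≤ 1 - Real.exp (-α / b) := by
    have : -α / b ≤ 0 := div_nonpos_of_nonpos_of_nonneg (by linarith) hb.le
    linarith [Real.exp_le_one_iff.2 this]
  have hokm : (D.prod ν) ok = ENNReal.ofReal ((1 - Real.exp (-α / b)) ^ k) := by
    rw [hok, Measure.prod_prod, measure_univ, one_mul, hν, Measure.pi_pi]
    simp [lap_abs_le hb hα, ENNReal.ofReal_pow hp]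
  have hbadm : (D.prod ν) (⋃ i, bad i) ≤ ENNReal.ofReal (k * γ) := by
    calc (D.prod ν) (⋃ i, bad i) ≤ ∑ i, (D.prod ν) (bad i) := measure_iUnion_fintype_le _ _
      _ ≤ ∑ _i : Fin k, ENNReal.ofReal γ :=
        Finset.sum_le_sum fun i _ => prod_bad_le D ν A hmeas i (hconc i)
      _ = ENNReal.ofReal (k * γ) := by
        simp [ENNReal.ofReal_mul]
  calc ENNReal.ofReal (1 - k * γ - (1 - (1 - Real.exp (-α / b)) ^ k))
      = ENNReal.ofReal ((1 - Real.exp (-α / b)) ^ k) - ENNReal.ofReal (k * γ) := by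
        rw [← ENNReal.ofReal_sub _ (by positivity)]
        congr 1
        ring
    _ ≤ (D.prod ν) ok - (D.prod ν) (⋃ i, bad i) := by
        rw [hokm]
        exact tsub_le_tsub_left hbadm _
    _ ≤ (D.prod ν) (ok \ ⋃ i, bad i) := le_measure_sdiff
    _ ≤ _ := by
        refine measure_mono fun ω hω i => ⟨?_, hω.1.2 i (Set.mem_univ i)⟩
        have h : ω ∉ bad i := fun h => hω.2 (Set.mem_iUnion.2 ⟨i, h⟩)
        exact (not_le.1 h).le
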